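/- For every x ∈ X* = {qπ/K : q ∈ ℤ} \ {qπ : q ∈ ℤ}, the loss function satisfies L(x) = |c2 / (c1·sin(x))|. -/

import Mathlib

open Real

/-- `J(x,y) = Σ_{k=0}^{K−1} (b + a·k·T)·cos(y − 2xk)`. -/
noncomputable def Jfun (K : ℕ) (T b a x y : ℝ) : ℝ :=
  ∑ k ∈ Finset.range K, (b + a * k * T) * Real.cos (y - 2 * x * k)

/-- The loss function `L(x) = −inf_{y ∈ [0,2π)} J(x,y)/(c1·K)`, with
`c1 = b + a·T·(K−1)/2`. -/
noncomputable def Lfun (K : ℕ) (T b a x : ℝ) : ℝ :=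
  -sInf ((fun y => Jfun K T b a x y) '' Set.Ico 0 (2 * π)) /
    ((b + a * T * ((K : ℝ) - 1) / 2) * K)

/-- `f1(x) = sin(Kx)/sin(x)`. -/
noncomputable def f1 (K : ℕ) (x : ℝ) : ℝ := Real.sin (K * x) / Real.sin x

/-- `f2(x) = K·cos(Kx)/sin(x) − sin(Kx)·cos(x)/sin(x)²`. -/
noncomputable def f2 (K : ℕ) (x : ℝ) : ℝ :=
  (K : ℝ) * Real.cos (K * x) / Real.sin x -
    Real.sin (K * x) * Real.cos x / (Real.sin x) ^ 2

theorem aux_sum0 (x y : ℝ) (n : ℕ) :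
    2 * Real.sin x * ∑ k ∈ Finset.range n, Real.cos (y - 2 * x * k) =
      Real.sin (y + x) - Real.sin (y - 2 * x * n + x) := by
  induction n with
  | zero => simp
  | succ n ih =>
    rw [Finset.sum_range_succ, mul_add, ih]
    have e : y - 2 * x * ((n + 1 : ℕ) : ℝ) + x = (y - 2 * x * n) - x := by push_cast; ring
    rw [e, Real.sin_sub (y - 2 * x * n) x, Real.sin_add (y - 2 * x * n) x]
    ring

theorem aux_sum1 (x y : ℝ) (n : ℕ) :
    4 * Real.sin x ^ 2 * ∑ k ∈ Finset.range n, (k : ℝ) * Real.cos (y - 2 * x * k) =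
      Real.cos (y - 2 * x * n) - Real.cos y - 2 * Real.sin x * n * Real.sin (y - 2 * x * n + x) := by
  induction n with
  | zero => simp
  | succ n ih =>
    rw [Finset.sum_range_succ, mul_add, ih]
    have e : y - 2 * x * ((n + 1 : ℕ) : ℝ) = (y - 2 * x * n) - x - x := by push_cast; ring
    rw [e, sub_add_cancel]
    generalize y - 2 * x * n = t
    rw [Real.cos_sub (t - x) x, Real.sin_sub t x, Real.cos_sub t x, Real.sin_add t x]
    push_cast
    have h := Real.sin_sq_add_cos_sq x
    have h2 : Real.cos x ^ 2 = 1 - Real.sin x ^ 2 := by linarith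
    ring_nf
    rw [h2]
    ring

theorem aux_J (K : ℕ) (hK : 2 ≤ K) (T b a x y : ℝ) (q : ℤ) (hq : x = q * π / K)
    (hs : Real.sin x ≠ 0) :
    Jfun K T b a x y = -(a * T * K / (2 * Real.sin x)) * Real.sin (y + x) := by
  have hK0 : (K : ℝ) ≠ 0 := by positivity
  have e : 2 * x * K = q * (2 * π) := by rw [hq]; field_simp
  have h0 := aux_sum0 x y K
  have h1 := aux_sum1 x y K
  have e2 : y - 2 * x * K + x = (y + x) - q * (2 * π) := by rw [e]; ring
  rw [e2, Real.sin_sub_int_mul_two_pi] at h0 h1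
  rw [e, Real.cos_sub_int_mul_two_pi] at h1
  have hJ : Jfun K T b a x y = b * ∑ k ∈ Finset.range K, Real.cos (y - 2 * x * k) +
      a * T * ∑ k ∈ Finset.range K, (k : ℝ) * Real.cos (y - 2 * x * k) := by
    unfold Jfun
    rw [Finset.mul_sum, Finset.mul_sum, ← Finset.sum_add_distrib]
    exact Finset.sum_congr rfl fun k _ => by ring
  rw [sub_self] at h0
  have h0' : ∑ k ∈ Finset.range K, Real.cos (y - 2 * x * k) = 0 := by
    rcases mul_eq_zero.1 h0 with h | h
    · exact absurd h (by simpa using hs)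
    · exact h
  have h1' : ∑ k ∈ Finset.range K, (k : ℝ) * Real.cos (y - 2 * x * k) =
      -(K / (2 * Real.sin x)) * Real.sin (y + x) := by
    have h4 : 4 * Real.sin x ^ 2 ≠ 0 := by positivity
    apply mul_left_cancel₀ h4
    rw [h1]; field_simp; ring
  rw [hJ, h0', h1']; ring

theorem aux_hit (x t : ℝ) : ∃ y ∈ Set.Ico 0 (2 * π), Real.sin (y + x) = Real.sin t := by
  refine ⟨toIcoMod Real.two_pi_pos 0 (t - x), by simpa using toIcoMod_mem_Ico Real.two_pi_pos 0 (t - x), ?_⟩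
  have : toIcoMod Real.two_pi_pos 0 (t - x) + x
      = t - (toIcoDiv Real.two_pi_pos 0 (t - x) : ℤ) * (2 * π) := by
    rw [toIcoMod, zsmul_eq_mul]; ring
  rw [this, Real.sin_sub_int_mul_two_pi]

theorem stmt_7 (K : ℕ) (hK : 2 ≤ K) (T b a : ℝ) (hT : 0 < T) (hb : 0 < b)
    (hpos : ∀ k, k < K → 0 < b + a * k * T) (x : ℝ)
    (hx : (∃ q : ℤ, x = q * π / K) ∧ ¬ (∃ q : ℤ, x = q * π)) :
    Lfun K T b a x =
      |(a * T / 2) / ((b + a * T * ((K : ℝ) - 1) / 2) * Real.sin x)| := by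
  obtain ⟨⟨q, hq⟩, hn⟩ := hx
  have hs : Real.sin x ≠ 0 := by
    intro h
    obtain ⟨n, h⟩ := Real.sin_eq_zero_iff.1 h
    exact hn ⟨n, h.symm⟩
  have hK0 : (0 : ℝ) < K := by positivity
  have hc : 0 < b + a * T * ((K : ℝ) - 1) / 2 := by
    have h := hpos (K - 1) (by omega)
    rw [Nat.cast_sub (by omega)] at h
    push_cast at h
    nlinarith
  have hJ := fun y => aux_J K hK T b a x y q hq hs
  set A := a * T * K / (2 * Real.sin x) with hA
  have hleast : IsLeast ((fun y => Jfun K T b a x y) '' Set.Ico 0 (2 * π)) (-|A|) := by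
    constructor
    · rcases le_total 0 A with h | h
      · obtain ⟨y, hy, h2⟩ := aux_hit x (π / 2)
        refine ⟨y, hy, ?_⟩
        simp only [hJ, h2, Real.sin_pi_div_two, abs_of_nonneg h, mul_one]
      · obtain ⟨y, hy, h2⟩ := aux_hit x (-(π / 2))
        refine ⟨y, hy, ?_⟩
        simp only [hJ, h2, Real.sin_neg, Real.sin_pi_div_two, abs_of_nonpos h]
        ring
    · rintro _ ⟨y, _, rfl⟩
      simp only [hJ]
      have h1 := neg_abs_le (-A * Real.sin (y + x))
      have h2 : |-A * Real.sin (y + x)| ≤ |A| := by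
        rw [abs_mul, abs_neg]
        exact mul_le_of_le_one_right (abs_nonneg _) (Real.abs_sin_le_one _)
      linarith
  unfold Lfun
  rw [hleast.csInf_eq, neg_neg]
  generalize b + a * T * ((K : ℝ) - 1) / 2 = c at *
  have : c * K = |c * K| := (abs_of_pos (by positivity)).symm
  rw [this, ← abs_div, hA]
  congr 1
  field_simp
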